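/- Let T be a string of length n and 1 ≤ i < j ≤ n. Let p be the starting position of the minimal suffix in Suf[i, j], and for each ℓ = 1, …, α(i, j) let p_ℓ be the starting position of the minimal suffix in Suf[j − Len(ℓ, j) + 1, j]. Then the minimal suffix of T[i..j] equals T[q..j] for some q ∈ {p, p_1, …, p_{α(i,j)}}. -/

import Mathlib

/-!
Let `s = T[q..j]` be the minimal suffix of `T[i..j]`, and let `p` be the start of the minimal
suffix in `Suf[a, j]` for some `a` with `i ≤ a ≤ q`. Since `s` is no larger than `T[p..j]`, while
appending `T[j+1..]` to both makes the second one no larger, `s` must be a prefix of `T[p..j]`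
(`prefix_of_not_lex`). It is also a suffix of it. As a minimal suffix is unbordered, these two
occurrences coincide or do not overlap (`eq_or_two_mul_length_le`): either `s = T[p..j]`, or
`2|s|` is at most the window length `j - a + 1` (`window_step`).

The window lengths at most double, `Len(ℓ+1, j) ≤ 2 Len(ℓ, j)` (`Len_succ_le`), so in the second
case `s` fits into the next smaller window. Starting from `[i, j]`, whose length is at most
`Len(α(i,j) + 1, j)`, and descending through the windows, the search stops at the latest at the
window of length `1`, whose only suffix starts at `j`.
-/

variable {α : Type*} [LinearOrder α]

/-- `substr T i j` is the 1-indexed substring `T[i..j]` (inclusive). -/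
def substr (T : List α) (i j : ℕ) : List α := (T.drop (i - 1)).take (j - i + 1)

/-- `sufFrom T i` is the 1-indexed suffix `T[i..]`. -/
def sufFrom (T : List α) (i : ℕ) : List α := T.drop (i - 1)

/-- `s` is the lexicographically minimal nonempty suffix of `w`. -/
def IsMinSuffix (w s : List α) : Prop :=
  s ≠ [] ∧ s <:+ w ∧ ∀ t, t ≠ [] → t <:+ w → ¬ List.Lex (· < ·) t s

/-- `Len ℓ j`: for `ℓ = 1` it is `1`; for `ℓ ≥ 2`, with `m = ⌊ℓ/2⌋ - 1`, it is
`2·2^m + (j mod 2^m)` if `ℓ` is even and `3·2^m + (j mod 2^m)` if `ℓ` is odd. -/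
def Len (ℓ j : ℕ) : ℕ :=
  if ℓ = 1 then 1
  else if ℓ % 2 = 0 then 2 * 2 ^ (ℓ / 2 - 1) + j % 2 ^ (ℓ / 2 - 1)
  else 3 * 2 ^ (ℓ / 2 - 1) + j % 2 ^ (ℓ / 2 - 1)

/-- A first mismatch between `s` and `u` would decide both comparisons in the same way, so one of
the two strings is a prefix of the other, and `h₁` rules out that `u` is a proper prefix of `s`. -/
theorem prefix_of_not_lex (s u z : List α) (h₁ : ¬ List.Lex (· < ·) u s)
    (h₂ : ¬ List.Lex (· < ·) (s ++ z) (u ++ z)) : s <+: u := by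
  induction s generalizing u with
  | nil => exact List.nil_prefix
  | cons a s ih =>
    cases u with
    | nil => exact absurd List.Lex.nil h₁
    | cons b u =>
      rcases lt_trichotomy a b with h | h | h
      · exact absurd (List.Lex.rel h) h₂
      · subst h
        exact List.cons_prefix_cons.2
          ⟨rfl, ih u (fun h => h₁ (List.Lex.cons h)) (fun h => h₂ (List.Lex.cons h))⟩
      · exact absurd (List.Lex.rel h) h₁

theorem lex_append_self (t v : List α) (hv : v ≠ []) : List.Lex (· < ·) t (t ++ v) := by
  induction t with
  | nil =>
    cases v with
    | nil => exact absurd rfl hv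
    | cons b v => exact List.Lex.nil
  | cons a t ih => exact List.Lex.cons ih

/-- A minimal suffix `s` of `w` either coincides with the suffix `u` of `w` that wins after
appending `z`, or occurs in `u` as a prefix and as a suffix without overlap: an overlap would be a
border of `s`, hence a smaller suffix of `w`. -/
theorem eq_or_two_mul_length_le {w s u z : List α} (hs : IsMinSuffix w s) (hu0 : u ≠ [])
    (hu : u <:+ w) (h : ¬ List.Lex (· < ·) (s ++ z) (u ++ z)) :
    s = u ∨ 2 * s.length ≤ u.length := by
  obtain ⟨hs0, hsw, hmin⟩ := hs
  have hpre : s <+: u := prefix_of_not_lex s u z (hmin u hu0 hu) h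
  have hsuf : s <:+ u := List.suffix_of_suffix_length_le hsw hu hpre.length_le
  obtain ⟨v, hv⟩ := hpre
  obtain ⟨x, hx⟩ := hsuf
  by_contra! hcon
  obtain ⟨hne, hlt⟩ := hcon
  have hx0 : x ≠ [] := by
    rintro rfl
    exact hne (by simpa using hx)
  have hlen : x.length < s.length := by
    have := congrArg List.length hx
    simp only [List.length_append] at this
    omega
  have hxs : x <+: s := by
    refine List.prefix_of_prefix_length_le (l₃ := u) ⟨s, hx⟩ ⟨v, hv⟩ hlen.le
  obtain ⟨t, rfl⟩ := hxs
  -- `t` is the overlap of the two occurrences, so `s = x ++ t = t ++ v`.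
  have htv : x ++ t = t ++ v := by
    have : x ++ (x ++ t) = x ++ (t ++ v) := by rw [hx, ← hv, List.append_assoc]
    exact List.append_cancel_left this
  have ht0 : t ≠ [] := by
    rintro rfl
    simp at hlen
  have hv0 : v ≠ [] := by
    rintro rfl
    have := congrArg List.length htv
    simp only [List.length_append, List.length_nil] at this
    exact hx0 (List.length_eq_zero_iff.1 (by omega))
  refine hmin t ht0 ((List.suffix_append x t).trans hsw) ?_
  rw [htv]
  exact lex_append_self t v hv0

theorem substr_eq_drop_take {β : Type*} (T : List β) {q j : ℕ} (hq : 1 ≤ q) (hqj : q ≤ j) :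
    substr T q j = (T.take j).drop (q - 1) := by
  rw [substr, List.drop_take]
  congr 1
  omega

theorem length_substr {β : Type*} (T : List β) {q j : ℕ} (hq : 1 ≤ q) (hqj : q ≤ j)
    (hj : j ≤ T.length) :
    (substr T q j).length = j - q + 1 := by
  simp only [substr, List.length_take, List.length_drop]
  omega

theorem substr_suffix {β : Type*} (T : List β) {i q j : ℕ} (hi : 1 ≤ i) (hiq : i ≤ q)
    (hqj : q ≤ j) : substr T q j <:+ substr T i j := by
  rw [substr_eq_drop_take T (hi.trans hiq) hqj, substr_eq_drop_take T hi (hiq.trans hqj)]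
  have : q - 1 = (i - 1) + (q - i) := by omega
  rw [this, ← List.drop_drop]
  exact List.drop_suffix _ _

theorem sufFrom_eq {β : Type*} (T : List β) {q j : ℕ} (hq : 1 ≤ q) (hqj : q ≤ j) :
    sufFrom T q = substr T q j ++ T.drop j := by
  have h : T.drop j = (T.drop (q - 1)).drop (j - q + 1) := by
    rw [List.drop_drop]
    congr 1
    omega
  rw [sufFrom, substr, h, List.take_append_drop]

/-- One step of the search: let `q` be the start of the minimal suffix of `T[i..j]` and suppose
that it lies in the window `[a, j]`. If `p` is the start of the minimal suffix in `Suf[a, j]`,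
then `T[p..j]` is the answer or the answer has at most half the length of the window. -/
theorem window_step (T : List α) {i a q p j : ℕ} (hi : 1 ≤ i) (hia : i ≤ a) (haq : a ≤ q)
    (hqj : q ≤ j) (hj : j ≤ T.length) (hs : IsMinSuffix (substr T i j) (substr T q j))
    (hap : a ≤ p) (hpj : p ≤ j)
    (hp : ∀ r, a ≤ r → r ≤ j → ¬ List.Lex (· < ·) (sufFrom T r) (sufFrom T p)) :
    substr T q j = substr T p j ∨ 2 * (j - q + 1) ≤ j - a + 1 := by
  have hlp := length_substr T (q := p) (by omega) hpj hj
  have hlq := length_substr T (q := q) (by omega) hqj hj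
  have hlex := hp q haq hqj
  rw [sufFrom_eq T (j := j) (by omega) hqj, sufFrom_eq T (j := j) (by omega) hpj] at hlex
  have hp0 : substr T p j ≠ [] := by
    intro h
    rw [h] at hlp
    simp at hlp
  rcases eq_or_two_mul_length_le hs hp0 (substr_suffix T hi (by omega) hpj) hlex with h | h
  · exact Or.inl h
  · right
    omega

theorem Len_one (j : ℕ) : Len 1 j = 1 := rfl

theorem Len_even (m j : ℕ) : Len (2 * m + 2) j = 2 * 2 ^ m + j % 2 ^ m := by
  have h : (2 * m + 2) / 2 - 1 = m := by omega
  rw [Len, if_neg (by omega), if_pos (by omega), h]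

theorem Len_odd (m j : ℕ) : Len (2 * m + 3) j = 3 * 2 ^ m + j % 2 ^ m := by
  have h : (2 * m + 3) / 2 - 1 = m := by omega
  rw [Len, if_neg (by omega), if_neg (by omega), h]

theorem level_cases {k : ℕ} (hk : 1 ≤ k) : k = 1 ∨ ∃ m, k = 2 * m + 2 ∨ k = 2 * m + 3 := by
  rcases Nat.even_or_odd' k with ⟨m, rfl | rfl⟩
  · exact Or.inr ⟨m - 1, by omega⟩
  · rcases m with _ | m
    · exact Or.inl rfl
    · exact Or.inr ⟨m, by omega⟩

theorem Len_succ_le (k j : ℕ) (hk : 1 ≤ k) : Len (k + 1) j ≤ 2 * Len k j := by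
  obtain rfl | ⟨m, rfl | rfl⟩ := level_cases hk
  · have := Len_even 0 j
    have := Len_one j
    simp_all [Nat.mod_one]
  · rw [Len_odd, Len_even]
    have := Nat.one_le_two_pow (n := m)
    omega
  · rw [Len_odd, show 2 * m + 3 + 1 = 2 * (m + 1) + 2 by ring, Len_even]
    have := Nat.mod_lt j (Nat.two_pow_pos (m + 1))
    rw [pow_succ] at *
    omega

theorem Len_mono_succ (k j : ℕ) (hk : 1 ≤ k) : Len k j ≤ Len (k + 1) j := by
  obtain rfl | ⟨m, rfl | rfl⟩ := level_cases hk
  · have := Len_even 0 j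
    have := Len_one j
    simp_all [Nat.mod_one]
  · rw [Len_odd, Len_even]
    omega
  · rw [Len_odd, show 2 * m + 3 + 1 = 2 * (m + 1) + 2 by ring, Len_even]
    have := Nat.mod_lt j (Nat.two_pow_pos m)
    rw [pow_succ] at *
    omega

/-- Let `T` be a string of length `n`, `1 ≤ i < j ≤ n`, let `p` be the starting position of the
minimal suffix in `Suf[i,j]`, `A = α(i,j)` the largest `ℓ ≥ 1` with `Len(ℓ,j) < j - i + 1`,
and for `1 ≤ ℓ ≤ A` let `ps ℓ` be the starting position of the minimal suffix in
`Suf[j - Len(ℓ,j) + 1, j]`.  Then the minimal suffix of `T[i..j]` equals `T[q..j]` for some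
`q ∈ {p, ps 1, …, ps A}`. -/
theorem stmt_4 (T : List α) (i j p A : ℕ) (ps : ℕ → ℕ)
    (hi : 1 ≤ i) (hij : i < j) (hj : j ≤ T.length)
    (hp1 : i ≤ p) (hp2 : p ≤ j)
    (hpmin : ∀ q, i ≤ q → q ≤ j → ¬ List.Lex (· < ·) (sufFrom T q) (sufFrom T p))
    (hA1 : 1 ≤ A) (hA2 : Len A j < j - i + 1)
    (hA3 : ∀ ℓ, 1 ≤ ℓ → Len ℓ j < j - i + 1 → ℓ ≤ A)
    (hps : ∀ ℓ, 1 ≤ ℓ → ℓ ≤ A →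
      j - Len ℓ j + 1 ≤ ps ℓ ∧ ps ℓ ≤ j ∧
        ∀ q, j - Len ℓ j + 1 ≤ q → q ≤ j →
          ¬ List.Lex (· < ·) (sufFrom T q) (sufFrom T (ps ℓ))) :
    ∀ s, IsMinSuffix (substr T i j) s →
      ∃ q, (q = p ∨ ∃ ℓ, 1 ≤ ℓ ∧ ℓ ≤ A ∧ q = ps ℓ) ∧ s = substr T q j := by
  intro s hs
  obtain ⟨q, hiq, hqj, rfl⟩ : ∃ q, i ≤ q ∧ q ≤ j ∧ s = substr T q j := by
    obtain ⟨hs0, hsw, -⟩ := id hs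
    have hlen := length_substr T hi hij.le hj
    have hle := hsw.length_le
    have hpos := List.length_pos_iff.2 hs0
    refine ⟨j + 1 - s.length, by omega, by omega, ?_⟩
    have h2 := substr_suffix T hi (q := j + 1 - s.length) (j := j) (by omega) (by omega)
    have hl2 := length_substr T (q := j + 1 - s.length) (by omega) (by omega) hj
    exact (List.suffix_of_suffix_length_le hsw h2 (by omega)).eq_of_length (by omega)
  have descend : ∀ k, 1 ≤ k → k ≤ A → Len k j ≤ Len A j → j - q + 1 ≤ Len k j →
      ∃ ℓ, 1 ≤ ℓ ∧ ℓ ≤ A ∧ substr T q j = substr T (ps ℓ) j := by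
    intro k hk
    induction k, hk using Nat.le_induction with
    | base =>
      intro hkA _ hq
      rw [Len_one] at hq
      obtain ⟨h1, h2, -⟩ := hps 1 le_rfl hkA
      rw [Len_one] at h1
      refine ⟨1, le_rfl, hkA, ?_⟩
      congr 1
      omega
    | succ k hk ih =>
      intro hkA hLA hq
      obtain ⟨h1, h2, h3⟩ := hps (k + 1) (by omega) hkA
      have hia : i ≤ j - Len (k + 1) j + 1 := by clear ih; omega
      have haq : j - Len (k + 1) j + 1 ≤ q := by clear ih; omega
      rcases window_step T hi hia haq hqj hj hs h1 h2 h3 with h | h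
      · exact ⟨k + 1, by omega, hkA, h⟩
      · have := Len_succ_le k j hk
        have := Len_mono_succ k j hk
        exact ih (by omega) (by omega) (by clear ih; omega)
  rcases window_step T hi le_rfl hiq hqj hj hs hp1 hp2 hpmin with h | h
  · exact ⟨p, Or.inl rfl, h⟩
  · have hA4 : j - i + 1 ≤ Len (A + 1) j := by
      by_contra! hlt
      have := hA3 (A + 1) (by omega) hlt
      omega
    have := Len_succ_le A j hA1
    obtain ⟨ℓ, h1, h2, h3⟩ := descend A hA1 le_rfl le_rfl (by omega)
    exact ⟨ps ℓ, Or.inr ⟨ℓ, h1, h2, rfl⟩, h3⟩
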